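/- arXiv:1911.08385 — 3 statements merged into one kernel-verified Lean document; each statement's English description precedes it below -/
import Mathlib

section
/- Let γ^1,…,γ^n be a Clifford family of N×N complex matrices, set γ^{ab} := (1/2)(γ^a γ^b − γ^b γ^a), define the spinor L-operator L^{ab}(u) := u·δ^{ab}·1_N − (1/2)·γ^{ab}, and put β := (n−2)/2. Then the inversion relation Σ_{b=1}^n L^{ab}(u + β + 1/2) · L^{bc}(−u − 1/2) = −u(u + β + 1)·δ^{ac}·1_N holds for all complex u and all indices a,c. -/
/-!
Let `P` be the matrix with entries `P^{ab} = γ^a γ^b`, the product of the column `γ` and the row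
`γ`. The Clifford relations give `γ^{ab} = P^{ab} - δ^{ab}` and `γ^b γ^b = 1`, so that
`L(u) = (u + 1/2) - (1/2) P` and `P² = n P`. Hence the coefficient of `P` in `L(v) L(w)` is
`-(1/2) (v + w + 1 - n/2)`, which vanishes for `v = u + β + 1/2` and `w = -u - 1/2`; what remains is
`(v + 1/2) (w + 1/2) = -u (u + β + 1)`.
-/

open Matrix

/-- A Clifford family in the ring `A`: elements satisfying the Clifford relations
`γ^a γ^b + γ^b γ^a = 2 δ^{ab}`. The index type `ι` replaces `{1, …, n}`. -/
def IsCliffordFamily {ι A : Type*} [DecidableEq ι] [Ring A] (γ : ι → A) : Prop :=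
  ∀ a b, γ a * γ b + γ b * γ a = if a = b then 2 else 0

section Definitions

variable {ι R A : Type*} [CommRing R] [Invertible (2 : R)] [Ring A] [Algebra R A]

variable (R) in
/-- The bivectors `γ^{ab} = (1/2) (γ^a γ^b - γ^b γ^a)` of a family `γ`, collected into a matrix over
`A` whose indices are the vector indices `a`, `b`. -/
def cliffordBivector (γ : ι → A) : Matrix ι ι A :=
  of fun a b ↦ ⅟(2 : R) • (γ a * γ b - γ b * γ a)

/-- The spinor `L`-operator `L^{ab}(u) = u δ^{ab} - (1/2) γ^{ab}`, as a matrix over `A` whose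
indices are the vector indices `a`, `b`, so that summing over a repeated index is matrix
multiplication. -/
def spinorL [DecidableEq ι] (γ : ι → A) (u : R) : Matrix ι ι A :=
  u • 1 - ⅟(2 : R) • cliffordBivector R γ

theorem spinorL_apply [DecidableEq ι] (γ : ι → A) (u : R) (a b : ι) :
    spinorL γ u a b = (u * if a = b then 1 else 0) • (1 : A) -
      ⅟(2 : R) • ⅟(2 : R) • (γ a * γ b - γ b * γ a) := by
  simp [spinorL, cliffordBivector, one_apply]

end Definitions

theorem smul_one_sub_mul_smul_one_sub_of_add_eq {R A : Type*} [CommRing R] [Ring A] [Algebra R A]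
    {P : A} {d x y s : R} (hP : P * P = d • P) (hxy : x + y = s * d) :
    (x • 1 - s • P) * (y • 1 - s • P) = (x * y) • (1 : A) := by
  calc (x • 1 - s • P) * (y • 1 - s • P)
      = (x * y) • 1 - (s * (x + y)) • P + (s * s) • (P * P) := by
        simp only [sub_mul, mul_sub, smul_mul_assoc, mul_smul_comm, one_mul, mul_one]
        module
    _ = (x * y) • 1 := by
        rw [hP, hxy]
        module

namespace IsCliffordFamily

variable {ι R A : Type*} [DecidableEq ι] [CommRing R] [Invertible (2 : R)] [Ring A] [Algebra R A]
  {γ : ι → A}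

theorem mul_self_eq_one (hγ : IsCliffordFamily γ) (h2 : IsUnit (2 : A)) (a : ι) :
    γ a * γ a = 1 := by
  have double : 2 * (γ a * γ a) = 2 * 1 := by simpa [two_mul] using hγ a a
  exact h2.mul_left_cancel double

theorem dotProduct_self [Fintype ι] (hγ : IsCliffordFamily γ) (h2 : IsUnit (2 : A)) :
    γ ⬝ᵥ γ = Fintype.card ι := by
  simp [dotProduct, hγ.mul_self_eq_one h2]

theorem vecMulVec_mul_vecMulVec_self [Fintype ι] (hγ : IsCliffordFamily γ)
    (h2 : IsUnit (2 : A)) :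
    vecMulVec γ γ * vecMulVec γ γ = Fintype.card ι • vecMulVec γ γ := by
  rw [vecMulVec_mul_vecMulVec, hγ.dotProduct_self h2, Nat.cast_smul_eq_nsmul, vecMulVec_smul]

theorem cliffordBivector_eq (hγ : IsCliffordFamily γ) :
    cliffordBivector R γ = vecMulVec γ γ - 1 := by
  ext a b
  have commutator : γ a * γ b - γ b * γ a = (2 : R) • (γ a * γ b - if a = b then 1 else 0) := by
    rw [eq_sub_of_add_eq' (hγ a b), smul_sub, smul_ite, smul_zero, two_smul, two_smul,
      one_add_one_eq_two]
    abel
  simp [cliffordBivector, commutator, vecMulVec_apply, one_apply]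

theorem spinorL_eq (hγ : IsCliffordFamily γ) (u : R) :
    spinorL γ u = (u + ⅟2) • 1 - ⅟(2 : R) • vecMulVec γ γ := by
  rw [spinorL, hγ.cliffordBivector_eq]
  module

end IsCliffordFamily

theorem spinor_L_inversion_general {ι R A : Type*} [Fintype ι] [DecidableEq ι] [CommRing R]
    [Invertible (2 : R)] [Ring A] [Algebra R A] {γ : ι → A} (hγ : IsCliffordFamily γ)
    {β : R} (hβ : β = ⅟2 * Fintype.card ι - 1) (u : R) :
    spinorL γ (u + β + ⅟2) * spinorL γ (-u - ⅟2) = (-(u * (u + β + 1))) • 1 := by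
  have h2 : IsUnit (2 : A) := by
    simpa only [map_ofNat] using (isUnit_of_invertible (2 : R)).map (algebraMap R A)
  have hP := hγ.vecMulVec_mul_vecMulVec_self h2
  rw [← Nat.cast_smul_eq_nsmul R] at hP
  have half_add_half : ⅟(2 : R) + ⅟2 = 1 := by rw [← two_mul, mul_invOf_self]
  have sum_eq : (u + β + ⅟2 + ⅟2) + (-u - ⅟2 + ⅟2) = ⅟2 * (Fintype.card ι : R) := by
    linear_combination hβ + half_add_half
  rw [hγ.spinorL_eq, hγ.spinorL_eq, smul_one_sub_mul_smul_one_sub_of_add_eq hP sum_eq]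
  congr 1
  linear_combination -u * half_add_half

/-- Inversion relation for the spinor L-operator of `so(n)`:
`Σ_b L^{ab}(u+β+1/2) · L^{bc}(−u−1/2) = −u(u+β+1)·δ^{ac}·1`, where
`L^{ab}(u) = u·δ^{ab}·1 − (1/2)·γ^{ab}`, `γ^{ab} = (1/2)(γ^aγ^b − γ^bγ^a)` and
`β = (n−2)/2`. -/
theorem spinor_L_inversion {n N : ℕ}
    (γ : Fin n → Matrix (Fin N) (Fin N) ℂ)
    (hγ : ∀ a b, γ a * γ b + γ b * γ a =
      if a = b then (2 : ℂ) • (1 : Matrix (Fin N) (Fin N) ℂ) else 0)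
    (L : ℂ → Fin n → Fin n → Matrix (Fin N) (Fin N) ℂ)
    (hL : ∀ u a b, L u a b =
      (u * (if a = b then (1 : ℂ) else 0)) • (1 : Matrix (Fin N) (Fin N) ℂ) -
        (1/2 : ℂ) • ((1/2 : ℂ) • (γ a * γ b - γ b * γ a)))
    (β : ℂ) (hβ : β = ((n : ℂ) - 2) / 2) :
    ∀ (u : ℂ) (a c : Fin n),
      ∑ b, L (u + β + 1/2) a b * L (-u - 1/2) b c =
        (-(u * (u + β + 1)) * (if a = c then (1 : ℂ) else 0)) •
          (1 : Matrix (Fin N) (Fin N) ℂ) := by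
  intro u a c
  let : Invertible (2 : ℂ) := invertibleOfNonzero two_ne_zero
  have hγ' : IsCliffordFamily γ := by simpa [IsCliffordFamily, ofNat_smul_eq_nsmul] using hγ
  have hL' (v : ℂ) (a b : Fin n) : L v a b = spinorL γ v a b := by
    simp [hL, spinorL_apply]
  have hβ' : β = ⅟2 * Fintype.card (Fin n) - 1 := by
    rw [hβ, invOf_eq_inv, Fintype.card_fin]
    ring
  simpa [hL', mul_apply, one_apply] using
    congr_fun₂ (spinor_L_inversion_general hγ' hβ' u) a c
end

section
/- Let m ≥ 1, d = 2m, N = 2^m, and let γ^1,…,γ^{2m} be a Clifford family of N×N complex matrices. For a subset A ⊆ {1,…,2m} let γ^A denote the product of the γ^a for a ∈ A taken in increasing order of the index (γ^∅ = 1_N). Then the flip operator S on ℂ^N ⊗ ℂ^N (S(x⊗y) = y⊗x) is given by the Fierz-type expansion S = 2^{−m} · Σ_{A ⊆ {1,…,2m}} (−1)^{|A|(|A|−1)/2} · γ^A ⊗ γ^A. -/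
open Kronecker

/-!
Every product `γ^A γ^B` with `A ≠ B` anticommutes with some generator, because the number of
generators is even, and is therefore traceless; on the other hand `γ^A γ^A = (-1)^{|A|(|A|-1)/2}`.
So the `γ^A` and their rescalings by `2^{-m} (-1)^{|A|(|A|-1)/2}` are biorthogonal for the trace
pairing. There are `2^{2m} = N^2` of them, so they are dual bases of the matrix algebra, and the
Casimir element `∑ e_A ⊗ e^A` of dual bases for the trace pairing is the flip.
-/

section Ring

variable {ι A : Type*} [Ring A]

/-- A Clifford family: pairwise anticommuting elements with square `1`. These are the relations
`γ a * γ b + γ b * γ a = 2 δ_{ab}` with the factor `2` cancelled in the case `a = b`, so that no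
division by `2` is needed to use them. -/
structure IsCliffordFamily_s10 (γ : ι → A) : Prop where
  mul_self (a : ι) : γ a * γ a = 1
  mul_eq_neg_mul {a b : ι} (hab : a ≠ b) : γ a * γ b = -(γ b * γ a)

theorem IsCliffordFamily_s10.of_anticommutator {R : Type*} [Ring R] [Module R A] [Invertible (2 : R)]
    [DecidableEq ι] {γ : ι → A}
    (hγ : ∀ a b, γ a * γ b + γ b * γ a = if a = b then (2 : R) • 1 else 0) :
    IsCliffordFamily_s10 γ where
  mul_self a := by
    have h := hγ a a
    rw [if_pos rfl, ← two_smul R] at h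
    exact (isUnit_of_invertible (2 : R)).smul_left_cancel.mp h
  mul_eq_neg_mul {a b} hab := eq_neg_of_add_eq_zero_left ((hγ a b).trans (if_neg hab))

namespace IsCliffordFamily_s10

variable {γ : ι → A}

theorem mul_prod_map [DecidableEq ι] (hγ : IsCliffordFamily_s10 γ) (c : ι) (l : List ι) :
    γ c * (l.map γ).prod = (-1) ^ (l.length + l.count c) * ((l.map γ).prod * γ c) := by
  induction l with
  | nil => simp
  | cons a l ih =>
    rw [List.map_cons, List.prod_cons, List.length_cons]
    obtain rfl | hca := eq_or_ne c a
    · rw [List.count_cons_self, add_add_add_comm, pow_add _ _ (1 + 1),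
        (Even.add_self 1).neg_one_pow, mul_one]
      calc γ c * (γ c * (l.map γ).prod)
          = γ c * (-1) ^ (l.length + l.count c) * ((l.map γ).prod * γ c) := by rw [ih, mul_assoc]
        _ = (-1) ^ (l.length + l.count c) * (γ c * (l.map γ).prod * γ c) := by
          rw [((Commute.neg_one_right (γ c)).pow_right _).eq]; simp only [mul_assoc]
    · rw [List.count_cons_of_ne hca.symm, add_right_comm, pow_succ]
      calc γ c * (γ a * (l.map γ).prod)
          = -γ a * (γ c * (l.map γ).prod) := by
            rw [← mul_assoc, hγ.mul_eq_neg_mul hca, ← neg_mul, mul_assoc]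
        _ = -γ a * (-1) ^ (l.length + l.count c) * ((l.map γ).prod * γ c) := by
            rw [ih, mul_assoc]
        _ = (-1) ^ (l.length + l.count c) * -1 * (γ a * (l.map γ).prod * γ c) := by
            rw [((Commute.neg_one_right (-γ a)).pow_right _).eq]
            simp only [mul_assoc, neg_mul, one_mul]

theorem prod_map_mul_self (hγ : IsCliffordFamily_s10 γ) {l : List ι} (hl : l.Nodup) :
    (l.map γ).prod * (l.map γ).prod = (-1) ^ (l.length * (l.length - 1) / 2) := by
  classical
  induction l with
  | nil => simp
  | cons a l ih =>
    obtain ⟨ha, hl⟩ := List.nodup_cons.mp hl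
    have move : γ a * (l.map γ).prod = (-1) ^ l.length * ((l.map γ).prod * γ a) := by
      rw [hγ.mul_prod_map, List.count_eq_zero_of_not_mem ha, add_zero]
    rw [List.map_cons, List.prod_cons, List.length_cons, Nat.triangle_succ, Nat.add_comm]
    calc γ a * (l.map γ).prod * (γ a * (l.map γ).prod)
        = (-1) ^ l.length * ((l.map γ).prod * (γ a * γ a) * (l.map γ).prod) := by
          nth_rw 1 [move]; simp only [mul_assoc]
      _ = (-1) ^ (l.length + l.length * (l.length - 1) / 2) := by
          rw [hγ.mul_self, mul_one, ih hl, pow_add]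

end IsCliffordFamily_s10

end Ring

theorem exists_odd_card_add_indicator {ι : Type*} [Fintype ι] [DecidableEq ι]
    (hι : Even (Fintype.card ι)) {s t : Finset ι} (hst : s ≠ t) :
    ∃ c, Odd (s.card + t.card + ((if c ∈ s then 1 else 0) + if c ∈ t then 1 else 0)) := by
  by_cases hcard : Even (s.card + t.card)
  · obtain ⟨c, hc⟩ : ∃ c, ¬(c ∈ s ↔ c ∈ t) := by
      simpa only [ne_eq, Finset.ext_iff, not_forall] using hst
    refine ⟨c, hcard.add_odd ?_⟩
    by_cases hs : c ∈ s <;> simp_all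
  · obtain ⟨c, hc⟩ : ∃ c, c ∈ s ↔ c ∈ t := by
      by_contra! h
      have ht : t = sᶜ := by ext c; have := h c; rw [Finset.mem_compl]; tauto
      exact hcard (by rwa [ht, Finset.card_add_card_compl])
    refine ⟨c, (Nat.not_even_iff_odd.mp hcard).add_even ?_⟩
    simp only [hc, Even.add_self]

/-- The product `γ^s` of the `γ a`, `a ∈ s`, taken in increasing order of the index. -/
def orderedProd {ι A : Type*} [LinearOrder ι] [Monoid A] (γ : ι → A) (s : Finset ι) : A :=
  ((s.sort (· ≤ ·)).map γ).prod

section Matrix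

variable {ι n R : Type*} [Fintype n] [DecidableEq n] [CommRing R]

namespace IsCliffordFamily_s10

variable {γ : ι → Matrix n n R}

theorem trace_prod_map_eq_zero [Invertible (2 : R)] [DecidableEq ι] (hγ : IsCliffordFamily_s10 γ)
    {c : ι} {l : List ι} (hc : Odd (l.length + l.count c)) : (l.map γ).prod.trace = 0 := by
  set P := (l.map γ).prod
  have anticomm : γ c * P = -(P * γ c) := by
    rw [hγ.mul_prod_map, hc.neg_one_pow, neg_one_mul]
  have trace_eq_neg : P.trace = -P.trace :=
    calc P.trace = (γ c * (γ c * P)).trace := by rw [← mul_assoc, hγ.mul_self, one_mul]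
      _ = -(γ c * (P * γ c)).trace := by rw [anticomm, mul_neg, Matrix.trace_neg]
      _ = -P.trace := by rw [Matrix.trace_mul_comm, mul_assoc, hγ.mul_self, mul_one]
  rw [← (isUnit_of_invertible (2 : R)).mul_right_eq_zero, two_mul]
  exact eq_neg_iff_add_eq_zero.mp trace_eq_neg

variable [LinearOrder ι]

theorem trace_orderedProd_mul_self (hγ : IsCliffordFamily_s10 γ) (s : Finset ι) :
    (orderedProd γ s * orderedProd γ s).trace =
      (-1) ^ (s.card * (s.card - 1) / 2) * (Fintype.card n : R) := by
  rw [orderedProd, hγ.prod_map_mul_self (s.sort_nodup _), Finset.length_sort,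
    ← neg_one_smul R (1 : Matrix n n R), smul_pow, one_pow, Matrix.trace_smul, Matrix.trace_one,
    smul_eq_mul]

theorem trace_orderedProd_mul_of_ne [Invertible (2 : R)] [Fintype ι] (hι : Even (Fintype.card ι))
    (hγ : IsCliffordFamily_s10 γ) {s t : Finset ι} (hst : s ≠ t) :
    (orderedProd γ s * orderedProd γ t).trace = 0 := by
  obtain ⟨c, hc⟩ := exists_odd_card_add_indicator hι hst
  rw [orderedProd, orderedProd, ← List.prod_append, ← List.map_append]
  refine hγ.trace_prod_map_eq_zero (c := c) ?_
  simpa only [List.length_append, List.count_append, Finset.length_sort,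
    (Finset.sort_nodup _ _).count, Finset.mem_sort] using hc

end IsCliffordFamily_s10

variable (n R) in
/-- The matrix of the flip operator `x ⊗ y ↦ y ⊗ x` on the tensor square of `n → R`. -/
def flipMatrix : Matrix (n × n) (n × n) R :=
  Equiv.Perm.permMatrix R (Equiv.prodComm n n)

theorem eq_flipMatrix_of_mulVec {S : Matrix (n × n) (n × n) R}
    (hS : ∀ x y : n → R, S.mulVec (fun p => x p.1 * y p.2) = fun p => y p.1 * x p.2) :
    S = flipMatrix n R := by
  refine Matrix.ext_of_mulVec_single fun ⟨j, l⟩ => ?_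
  have single_eq : (Pi.single (j, l) 1 : n × n → R) =
      fun p => (Pi.single j 1 : n → R) p.1 * (Pi.single l 1 : n → R) p.2 := by
    ext ⟨p, q⟩
    simp only [Pi.single_apply, Prod.mk.injEq, ite_and, ite_mul, one_mul, zero_mul]
  rw [single_eq, hS, flipMatrix, Matrix.permMatrix_mulVec]
  ext p
  exact mul_comm _ _

theorem sum_kronecker_eq_flipMatrix {I : Type*} [Fintype I] [DecidableEq I]
    {P Q : I → Matrix n n R} (hcard : Fintype.card I = Fintype.card n * Fintype.card n)
    (hPQ : ∀ A B, (P A * Q B).trace = if A = B then 1 else 0) :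
    ∑ A, P A ⊗ₖ Q A = flipMatrix n R := by
  let rows : Matrix I (n × n) R := .of fun A p => P A p.1 p.2
  let cols : Matrix (n × n) I R := .of fun p A => Q A p.2 p.1
  have rows_mul_cols : rows * cols = 1 := by
    ext A B
    rw [Matrix.one_apply, ← hPQ]
    simp only [rows, cols, Matrix.mul_apply, Matrix.trace, Matrix.diag, Matrix.of_apply,
      Fintype.sum_prod_type]
  have cols_mul_rows : cols * rows = 1 :=
    (Matrix.mul_eq_one_comm_of_card_eq _ _ _ (by rw [hcard, Fintype.card_prod])).mp rows_mul_cols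
  ext ⟨i, k⟩ ⟨j, l⟩
  have entry := congrFun₂ cols_mul_rows (l, k) (i, j)
  simp only [rows, cols, Matrix.mul_apply, Matrix.of_apply, Matrix.one_apply] at entry
  simp only [Matrix.sum_apply, Matrix.kroneckerMap_apply, mul_comm (P _ _ _), entry, flipMatrix,
    Equiv.Perm.permMatrix, PEquiv.toMatrix_toPEquiv_apply, Equiv.prodComm_apply, Prod.swap_prod_mk,
    Pi.single_apply, Prod.mk.injEq]
  exact if_congr (by tauto) rfl rfl

theorem flip_fierz_expansion_general [Invertible (2 : R)] [Fintype ι] [LinearOrder ι] {m : ℕ}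
    (hι : Fintype.card ι = 2 * m) (hn : Fintype.card n = 2 ^ m)
    {γ : ι → Matrix n n R} (hγ : IsCliffordFamily_s10 γ) {S : Matrix (n × n) (n × n) R}
    (hS : ∀ x y : n → R, S.mulVec (fun p => x p.1 * y p.2) = fun p => y p.1 * x p.2) :
    S = (⅟2 : R) ^ m • ∑ s : Finset ι,
      (-1 : R) ^ (s.card * (s.card - 1) / 2) • (orderedProd γ s ⊗ₖ orderedProd γ s) := by
  let dual (s : Finset ι) : Matrix n n R :=
    ((⅟2 : R) ^ m * (-1) ^ (s.card * (s.card - 1) / 2)) • orderedProd γ s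
  have card_eq : Fintype.card (Finset ι) = Fintype.card n * Fintype.card n := by
    rw [Fintype.card_finset, hι, hn, two_mul, pow_add]
  have biorthogonal (s t : Finset ι) :
      (orderedProd γ s * dual t).trace = if s = t then 1 else 0 := by
    rw [Matrix.mul_smul, Matrix.trace_smul, smul_eq_mul]
    split_ifs with hst
    · subst hst
      rw [hγ.trace_orderedProd_mul_self, hn, Nat.cast_pow, Nat.cast_ofNat]
      calc (⅟2 : R) ^ m * (-1) ^ (s.card * (s.card - 1) / 2) *
            ((-1) ^ (s.card * (s.card - 1) / 2) * 2 ^ m)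
          = (⅟2 * 2 : R) ^ m * (-1 * -1) ^ (s.card * (s.card - 1) / 2) := by
            simp only [mul_pow]; ring
        _ = 1 := by rw [invOf_mul_self, one_pow, neg_one_mul, neg_neg, one_pow, one_mul]
    · rw [hγ.trace_orderedProd_mul_of_ne (hι ▸ even_two_mul m) hst, mul_zero]
  rw [eq_flipMatrix_of_mulVec hS, ← sum_kronecker_eq_flipMatrix card_eq biorthogonal,
    Finset.smul_sum]
  simp only [dual, Matrix.kronecker_smul, mul_smul]

end Matrix

/-- Fierz-type expansion of the flip operator on the tensor square of the spinor space:
for a Clifford family `γ^1,…,γ^{2m}` of `2^m × 2^m` matrices,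
`S = 2^{−m} · Σ_{A ⊆ {1,…,2m}} (−1)^{|A|(|A|−1)/2} · γ^A ⊗ γ^A`,
where `γ^A` is the ordered product of the `γ^a`, `a ∈ A`, and `S(x⊗y) = y⊗x`. -/
theorem flip_fierz_expansion (m : ℕ) (hm : 1 ≤ m)
    (γ : Fin (2 * m) → Matrix (Fin (2 ^ m)) (Fin (2 ^ m)) ℂ)
    (hγ : ∀ a b, γ a * γ b + γ b * γ a =
      if a = b then (2 : ℂ) • (1 : Matrix (Fin (2 ^ m)) (Fin (2 ^ m)) ℂ) else 0)
    (S : Matrix (Fin (2 ^ m) × Fin (2 ^ m)) (Fin (2 ^ m) × Fin (2 ^ m)) ℂ)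
    (hS : ∀ x y : Fin (2 ^ m) → ℂ,
      S.mulVec (fun p => x p.1 * y p.2) = fun p => y p.1 * x p.2) :
    S = ((2 : ℂ) ^ m)⁻¹ •
      ∑ A : Finset (Fin (2 * m)),
        ((-1 : ℂ) ^ (A.card * (A.card - 1) / 2)) •
          (((A.sort (· ≤ ·)).map γ).prod ⊗ₖ ((A.sort (· ≤ ·)).map γ).prod) := by
  simpa only [invOf_eq_inv, inv_pow, orderedProd] using flip_fierz_expansion_general
    (Fintype.card_fin _) (Fintype.card_fin _) (.of_anticommutator hγ) hS
end

section
/- Let V = ℂ⁴ with basis indexed by {1,2,3,4} and for each complex u define the operator R(u) on V ⊗ V by its only nonzero matrix entries: R^{αα}_{αα}(u) = u+1 for α = 1,2,3,4; R^{14}_{14}(u) = R^{23}_{23}(u) = R^{32}_{32}(u) = R^{41}_{41}(u) = u; and R^{14}_{41}(u) = R^{41}_{14}(u) = R^{23}_{32}(u) = R^{32}_{23}(u) = 1. Then R satisfies the Yang–Baxter equation: for all complex u, v, R_{12}(u−v) · R_{13}(u) · R_{23}(v) = R_{23}(v) · R_{13}(u) · R_{12}(u−v) on V ⊗ V ⊗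 V. -/
/-- The chiral part `ℛ⁽²⁾` of the spinorial `so(4)` R-matrix on `ℂ⁴ ⊗ ℂ⁴`
(basis indexed by `{1,2,3,4}`, here realized as `Fin 4` via `α ↦ α+1`).
Its only nonzero entries are `R^{αα}_{αα} = u+1`,
`R^{14}_{14} = R^{23}_{23} = R^{32}_{32} = R^{41}_{41} = u`, and
`R^{14}_{41} = R^{41}_{14} = R^{23}_{32} = R^{32}_{23} = 1`. -/
def chiralSo4R (u : ℂ) : Matrix (Fin 4 × Fin 4) (Fin 4 × Fin 4) ℂ :=
  Matrix.of fun p q =>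
    if p.1 = p.2 ∧ q = p then u + 1
    else if (p.1 : ℕ) + (p.2 : ℕ) = 3 ∧ q = p then u
    else if (p.1 : ℕ) + (p.2 : ℕ) = 3 ∧ q = (p.2, p.1) then 1
    else 0

/-- `R₁₂(u)` on `ℂ⁴ ⊗ ℂ⁴ ⊗ ℂ⁴`. -/
def chiralSo4R12 (u : ℂ) : Matrix (Fin 4 × Fin 4 × Fin 4) (Fin 4 × Fin 4 × Fin 4) ℂ :=
  Matrix.of fun p q =>
    chiralSo4R u (p.1, p.2.1) (q.1, q.2.1) * (if p.2.2 = q.2.2 then 1 else 0)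

/-- `R₁₃(u)` on `ℂ⁴ ⊗ ℂ⁴ ⊗ ℂ⁴`. -/
def chiralSo4R13 (u : ℂ) : Matrix (Fin 4 × Fin 4 × Fin 4) (Fin 4 × Fin 4 × Fin 4) ℂ :=
  Matrix.of fun p q =>
    chiralSo4R u (p.1, p.2.2) (q.1, q.2.2) * (if p.2.1 = q.2.1 then 1 else 0)

/-- `R₂₃(u)` on `ℂ⁴ ⊗ ℂ⁴ ⊗ ℂ⁴`. -/
def chiralSo4R23 (u : ℂ) : Matrix (Fin 4 × Fin 4 × Fin 4) (Fin 4 × Fin 4 × Fin 4) ℂ :=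
  Matrix.of fun p q =>
    chiralSo4R u (p.2.1, p.2.2) (q.2.1, q.2.2) * (if p.1 = q.1 then 1 else 0)

/-!
Label the basis vectors so that `1`, `4` carry one label and `2`, `3` the other. Then
`R(u) = E (u + P)`, where `P` is the flip and `E` projects onto the span of the `e_α ⊗ e_β` with `α`
and `β` equally labelled. In a threefold product any two of the projections `E₁₂`, `E₁₃`, `E₂₃`
multiply to the projection `F` onto the span of the basis tensors with all three labels equal, and
moving them past the flips turns each side of the Yang–Baxter equation into `F` times the
corresponding product of the matrices `u + Pᵢⱼ`. What remains is Yang's identity, which follows from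
the relations between transpositions.
-/

section Algebra

/-- The hypotheses hold when `x`, `y`, `z` represent the transpositions `(12)`, `(13)`, `(23)`. -/
theorem yang_identity {K A : Type*} [CommRing K] [Ring A] [Algebra K A] {x y z : A}
    (hxy : x * y = y * z) (hyz : y * z = z * x) (hyx : y * x = z * y) (hzy : z * y = x * z)
    (u v : K) :
    ((u - v) • 1 + x) * (u • 1 + y) * (v • 1 + z) =
      (v • 1 + z) * (u • 1 + y) * ((u - v) • 1 + x) := by
  have cubic : x * y * z = z * y * x := by
    rw [mul_assoc, hyz, ← mul_assoc, hzy]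
  simp only [add_mul, mul_add, smul_mul_assoc, mul_smul_comm, one_mul, mul_one, cubic]
  rw [hyx, hzy, hxy, hyz]
  module

theorem mul_mul_mul_eq_of_absorb {S : Type*} [Semigroup S] {e f g p x y z : S}
    (hexf : e * x * f = p * x) (hpg : p * g = p) (hpx : Commute p x) (hpy : Commute p y) :
    e * x * (f * y) * (g * z) = p * (x * y * z) := by
  have hpxy : Commute p (x * y) := hpx.mul_right hpy
  calc
    e * x * (f * y) * (g * z) = e * x * f * y * (g * z) := by simp only [mul_assoc]
    _ = p * (x * y) * (g * z) := by rw [hexf, mul_assoc p]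
    _ = x * y * (p * g) * z := by rw [hpxy.eq]; simp only [mul_assoc]
    _ = p * (x * y * z) := by rw [hpg, ← hpxy.eq]; simp only [mul_assoc]

end Algebra

section SupportProj

variable {X K : Type*} [DecidableEq X] [CommSemiring K]

variable (K) in
/-- The projection of `X → K` onto the functions supported where `p` holds. -/
def supportProj (p : X → Prop) [DecidablePred p] : Matrix X X K :=
  Matrix.diagonal fun x => if p x then 1 else 0

/-- Yang's matrix `u + P`, with the flip replaced by an arbitrary permutation `σ` of the basis. -/
def yangMatrix (σ : Equiv.Perm X) (u : K) : Matrix X X K :=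
  u • 1 + σ.permMatrix K

variable [Fintype X] {p q r : X → Prop} [DecidablePred p] [DecidablePred q] [DecidablePred r]
  {σ : Equiv.Perm X}

theorem supportProj_mul_yangMatrix_apply (u : K) (x y : X) :
    (supportProj K p * yangMatrix σ u) x y =
      if p x then u * (if x = y then 1 else 0) + (if σ x = y then 1 else 0) else 0 := by
  simp [supportProj, yangMatrix, Matrix.one_apply, PEquiv.toMatrix_apply, eq_comm]

theorem supportProj_mul_supportProj (h : ∀ x, p x ∧ q x ↔ r x) :
    supportProj K p * supportProj K q = supportProj K r := by
  simp only [supportProj, Matrix.diagonal_mul_diagonal, ite_zero_mul_ite_zero, mul_one, h]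

theorem permMatrix_mul_supportProj (h : ∀ x, q (σ x) ↔ p x) :
    σ.permMatrix K * supportProj K q = supportProj K p * σ.permMatrix K := by
  ext x y
  by_cases hxy : σ x = y
  · subst hxy
    simp [supportProj, PEquiv.toMatrix_apply, h]
  · simp [supportProj, PEquiv.toMatrix_apply, hxy]

theorem supportProj_mul_yangMatrix_mul_supportProj (h : ∀ x, p x ∧ q x ↔ r x)
    (hσ : ∀ x, p x ∧ q (σ x) ↔ r x) (u : K) :
    supportProj K p * yangMatrix σ u * supportProj K q = supportProj K r * yangMatrix σ u := by
  have hPq : σ.permMatrix K * supportProj K q =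
      supportProj K (fun x => q (σ x)) * σ.permMatrix K :=
    permMatrix_mul_supportProj fun _ => Iff.rfl
  simp only [yangMatrix, mul_add, add_mul, mul_smul_comm, smul_mul_assoc, mul_one]
  rw [supportProj_mul_supportProj h, mul_assoc, hPq, ← mul_assoc, supportProj_mul_supportProj hσ]

theorem commute_supportProj_yangMatrix (h : ∀ x, p (σ x) ↔ p x) (u : K) :
    Commute (supportProj K p) (yangMatrix σ u) :=
  ((Commute.one_right _).smul_right u).add_right (permMatrix_mul_supportProj h).symm

end SupportProj

section Legs

variable {α K : Type*} [DecidableEq α] [CommSemiring K]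

/-- `R₁₂`: the matrix `R` acting on the first two of three tensor factors. -/
def leg12 (R : Matrix (α × α) (α × α) K) : Matrix (α × α × α) (α × α × α) K :=
  Matrix.of fun p q => R (p.1, p.2.1) (q.1, q.2.1) * (if p.2.2 = q.2.2 then 1 else 0)

/-- `R₁₃`: the matrix `R` acting on the outer two of three tensor factors. -/
def leg13 (R : Matrix (α × α) (α × α) K) : Matrix (α × α × α) (α × α × α) K :=
  Matrix.of fun p q => R (p.1, p.2.2) (q.1, q.2.2) * (if p.2.1 = q.2.1 then 1 else 0)

/-- `R₂₃`: the matrix `R` acting on the last two of three tensor factors. -/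
def leg23 (R : Matrix (α × α) (α × α) K) : Matrix (α × α × α) (α × α × α) K :=
  Matrix.of fun p q => R (p.2.1, p.2.2) (q.2.1, q.2.2) * (if p.1 = q.1 then 1 else 0)

/-- The transposition of the first two of three indices. -/
@[simps]
def swap12 : Equiv.Perm (α × α × α) where
  toFun p := (p.2.1, p.1, p.2.2)
  invFun p := (p.2.1, p.1, p.2.2)
  left_inv _ := rfl
  right_inv _ := rfl

/-- The transposition of the outer two of three indices. -/
@[simps]
def swap13 : Equiv.Perm (α × α × α) where
  toFun p := (p.2.2, p.2.1, p.1)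
  invFun p := (p.2.2, p.2.1, p.1)
  left_inv _ := rfl
  right_inv _ := rfl

/-- The transposition of the last two of three indices. -/
@[simps]
def swap23 : Equiv.Perm (α × α × α) where
  toFun p := (p.1, p.2.2, p.2.1)
  invFun p := (p.1, p.2.2, p.2.1)
  left_inv _ := rfl
  right_inv _ := rfl

variable [Fintype α]

theorem yangMatrix_yangBaxter {A : Type*} [CommRing A] (u v : A) :
    yangMatrix swap12 (u - v) * yangMatrix swap13 u * yangMatrix (swap23 (α := α)) v =
      yangMatrix swap23 v * yangMatrix swap13 u * yangMatrix swap12 (u - v) := by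
  apply yang_identity <;> simp only [← PEquiv.toMatrix_trans, ← Equiv.toPEquiv_trans] <;> rfl

end Legs

section BlockYang

variable {α B K : Type*} [DecidableEq α] [Fintype α] [DecidableEq B] [CommSemiring K]

/-- The R-matrix on `V ⊗ V`, for `V` with basis `α`, that is Yang's `u + P` on `W ⊗ W` for each
block `W` of `V` and zero on `W ⊗ W'` for distinct blocks `W` and `W'`. The blocks are encoded as
the fibres of `β`. -/
def blockYangR (β : α → B) (u : K) : Matrix (α × α) (α × α) K :=
  supportProj K (fun p => β p.1 = β p.2) * yangMatrix (Equiv.prodComm α α) u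

variable (β : α → B)

theorem blockYangR_apply (u : K) (a b c d : α) :
    blockYangR β u (a, b) (c, d) =
      if β a = β b then
        u * (if a = c ∧ b = d then 1 else 0) + (if b = c ∧ a = d then 1 else 0)
      else 0 := by
  simp [blockYangR, supportProj_mul_yangMatrix_apply]

theorem leg12_blockYangR (u : K) :
    leg12 (blockYangR β u) =
      supportProj K (fun p => β p.1 = β p.2.1) * yangMatrix swap12 u := by
  ext ⟨a, b, c⟩ ⟨x, y, z⟩
  by_cases h : c = z <;>
    simp [leg12, blockYangR_apply, supportProj_mul_yangMatrix_apply, h]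

theorem leg13_blockYangR (u : K) :
    leg13 (blockYangR β u) =
      supportProj K (fun p => β p.1 = β p.2.2) * yangMatrix swap13 u := by
  ext ⟨a, b, c⟩ ⟨x, y, z⟩
  by_cases h : b = y <;>
    simp [leg13, blockYangR_apply, supportProj_mul_yangMatrix_apply, h]

theorem leg23_blockYangR (u : K) :
    leg23 (blockYangR β u) =
      supportProj K (fun p => β p.2.1 = β p.2.2) * yangMatrix swap23 u := by
  ext ⟨a, b, c⟩ ⟨x, y, z⟩
  by_cases h : a = x <;>
    simp [leg23, blockYangR_apply, supportProj_mul_yangMatrix_apply, h]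

variable (K) in
/-- The projection onto the span of the `W ⊗ W ⊗ W` for the blocks `W` of `β`. -/
def tripleBlockProj : Matrix (α × α × α) (α × α × α) K :=
  supportProj K fun p => β p.1 = β p.2.1 ∧ β p.2.1 = β p.2.2

theorem leg12_mul_leg13_mul_leg23_blockYangR (u v w : K) :
    leg12 (blockYangR β u) * leg13 (blockYangR β v) * leg23 (blockYangR β w) =
      tripleBlockProj K β * (yangMatrix swap12 u * yangMatrix swap13 v * yangMatrix swap23 w) := by
  rw [leg12_blockYangR, leg13_blockYangR, leg23_blockYangR]
  apply mul_mul_mul_eq_of_absorb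
  · apply supportProj_mul_yangMatrix_mul_supportProj <;> grind [swap12_apply]
  · exact supportProj_mul_supportProj (by grind)
  · exact commute_supportProj_yangMatrix (by grind [swap12_apply]) u
  · exact commute_supportProj_yangMatrix (by grind [swap13_apply]) v

theorem leg23_mul_leg13_mul_leg12_blockYangR (u v w : K) :
    leg23 (blockYangR β u) * leg13 (blockYangR β v) * leg12 (blockYangR β w) =
      tripleBlockProj K β * (yangMatrix swap23 u * yangMatrix swap13 v * yangMatrix swap12 w) := by
  rw [leg12_blockYangR, leg13_blockYangR, leg23_blockYangR]
  apply mul_mul_mul_eq_of_absorb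
  · apply supportProj_mul_yangMatrix_mul_supportProj <;> grind [swap23_apply]
  · exact supportProj_mul_supportProj (by grind)
  · exact commute_supportProj_yangMatrix (by grind [swap23_apply]) u
  · exact commute_supportProj_yangMatrix (by grind [swap13_apply]) v

theorem chiralSo4R_YangBaxter_general {A : Type*} [CommRing A] (u v : A) :
    leg12 (blockYangR β (u - v)) * leg13 (blockYangR β u) * leg23 (blockYangR β v) =
      leg23 (blockYangR β v) * leg13 (blockYangR β u) * leg12 (blockYangR β (u - v)) := by
  rw [leg12_mul_leg13_mul_leg23_blockYangR, leg23_mul_leg13_mul_leg12_blockYangR,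
    yangMatrix_yangBaxter]

end BlockYang

/-- The labelling of the basis of `ℂ⁴` whose fibres are `{1, 4}` and `{2, 3}`, that is `{0, 3}` and
`{1, 2}` in `Fin 4`. -/
def chiralBlock (a : Fin 4) : Fin 4 :=
  min a a.rev

theorem chiralBlock_eq_iff :
    ∀ a b : Fin 4, chiralBlock a = chiralBlock b ↔ a = b ∨ (a : ℕ) + (b : ℕ) = 3 := by
  decide

theorem chiralSo4R_eq_blockYangR (u : ℂ) : chiralSo4R u = blockYangR chiralBlock u := by
  ext ⟨a, b⟩ ⟨c, d⟩
  simp only [chiralSo4R, Matrix.of_apply, blockYangR_apply, chiralBlock_eq_iff, Prod.mk.injEq]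
  grind

theorem chiralSo4R12_eq_leg12_blockYangR (u : ℂ) :
    chiralSo4R12 u = leg12 (blockYangR chiralBlock u) := by
  rw [← chiralSo4R_eq_blockYangR]
  rfl

theorem chiralSo4R13_eq_leg13_blockYangR (u : ℂ) :
    chiralSo4R13 u = leg13 (blockYangR chiralBlock u) := by
  rw [← chiralSo4R_eq_blockYangR]
  rfl

theorem chiralSo4R23_eq_leg23_blockYangR (u : ℂ) :
    chiralSo4R23 u = leg23 (blockYangR chiralBlock u) := by
  rw [← chiralSo4R_eq_blockYangR]
  rfl

/-- The chiral part of the spinorial `so(4)` R-matrix satisfies the Yang–Baxter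
equation. -/
theorem chiralSo4R_YangBaxter (u v : ℂ) :
    chiralSo4R12 (u - v) * chiralSo4R13 u * chiralSo4R23 v =
      chiralSo4R23 v * chiralSo4R13 u * chiralSo4R12 (u - v) := by
  simpa only [chiralSo4R12_eq_leg12_blockYangR, chiralSo4R13_eq_leg13_blockYangR,
    chiralSo4R23_eq_leg23_blockYangR] using chiralSo4R_YangBaxter_general chiralBlock u v
end
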